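/- Let r > 0 and a ∈ D_r^+ = {x = (x₁,x₂) : |x| < r, x₁ > 0}. Then for every complex-valued function u which is smooth on an open neighborhood of the closure of D_r^+, vanishes on a neighborhood of a, and vanishes at every point with x₁ = 0, the inequality (1/r) ∫_{S_r^+} |u|² ds ≤ ∫_{D_r^+} |i∇u + A_a u|² dx holds, where S_r^+ = {x : |x| = r, x₁ ≥ 0} is the half-circle of radius r and ds denotes arclength measure. -/

import Mathlib

/-!
Along a horizontal chord `0 < s < R` the weight `s` solves `w'' = 0` and vanishes with `u` at
`s = 0`. Completing the square, `|(i∂₁ + A₁)u|² ≥ ∂₁(|u|² / s)` whatever the real potential `A₁` is,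
so the energy on the chord is at least `|u|² / R` at its end point on the circle. Writing that end
point as `r (cos t, sin t)` gives `R = r cos t` and `dx₂ = r cos t dt`, hence
`|u|² / R dx₂ = |u|² dt = (1/r) |u|² ds`, and Fubini's theorem concludes.
-/

open MeasureTheory Set Filter Topology
open scoped RealInnerProductSpace

section OneDimensional

theorem continuousAt_div_self_zero {f : ℝ → ℝ} (hf : HasDerivAt f 0 0) (h0 : f 0 = 0) :
    ContinuousAt (fun s => f s / s) 0 := by
  have hslope : (fun s => f s / s) = dslope f 0 := by
    ext s
    rcases eq_or_ne s 0 with rfl | hs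
    · rw [dslope_same, hf.deriv, div_zero]
    · rw [dslope_of_ne f hs, slope_def_field, h0, sub_zero, sub_zero]
  rw [hslope]
  exact continuousAt_dslope_same.2 hf.differentiableAt

variable {E : Type*} [NormedAddCommGroup E] [InnerProductSpace ℝ E]

theorem two_mul_inner_div_sub_le_norm_sq (z w : E) (s : ℝ) :
    2 * ⟪z, w⟫ / s - ‖z‖ ^ 2 / s ^ 2 ≤ ‖w‖ ^ 2 := by
  have hsq : ‖w - s⁻¹ • z‖ ^ 2 = ‖w‖ ^ 2 - (2 * ⟪z, w⟫ / s - ‖z‖ ^ 2 / s ^ 2) := by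
    rw [norm_sub_sq_real, real_inner_smul_right, real_inner_comm, norm_smul, mul_pow,
      Real.norm_eq_abs, sq_abs]
    ring
  exact sub_nonneg.1 (hsq ▸ sq_nonneg _)

theorem norm_sq_div_le_integral_of_inner_le {R : ℝ} (hR : 0 ≤ R) {h h' : ℝ → E} {φ : ℝ → ℝ}
    (hderiv : ∀ s ∈ Icc 0 R, HasDerivAt h (h' s) s) (h0 : h 0 = 0)
    (hφ : IntegrableOn φ (Icc 0 R))
    (hle : ∀ s ∈ Ioo 0 R, 2 * ⟪h s, h' s⟫ / s - ‖h s‖ ^ 2 / s ^ 2 ≤ φ s) :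
    ‖h R‖ ^ 2 / R ≤ ∫ s in (0 : ℝ)..R, φ s := by
  have hquot : ∀ s ∈ Icc 0 R, s ≠ 0 → HasDerivAt (fun s => ‖h s‖ ^ 2 / s)
      (2 * ⟪h s, h' s⟫ / s - ‖h s‖ ^ 2 / s ^ 2) s := fun s hs hs0 =>
    ((hderiv s hs).norm_sq.div (hasDerivAt_id' s) hs0).congr_deriv (by field_simp)
  have hcont : ContinuousOn (fun s => ‖h s‖ ^ 2 / s) (Icc 0 R) := fun s hs => by
    refine ContinuousAt.continuousWithinAt ?_
    rcases eq_or_ne s 0 with rfl | hs0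
    · refine continuousAt_div_self_zero ?_ (by simp [h0])
      simpa [h0] using (hderiv 0 hs).norm_sq
    · exact (hquot s hs hs0).continuousAt
  simpa using intervalIntegral.sub_le_integral_of_hasDeriv_right_of_le hR hcont
    (fun s hs => (hquot s (Ioo_subset_Icc_self hs) hs.1.ne').hasDerivWithinAt) hφ hle

/-- The real potential drops out because `⟪iz, Az⟫ = 0`. -/
theorem two_mul_inner_div_sub_le_norm_sq_magnetic (z w : ℂ) (A s : ℝ) :
    2 * ⟪z, w⟫ / s - ‖z‖ ^ 2 / s ^ 2 ≤ ‖Complex.I * w + A * z‖ ^ 2 := by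
  have hinner : ⟪Complex.I * z, Complex.I * w + A * z⟫ = ⟪z, w⟫ := by
    simp only [Complex.inner, Complex.mul_re, Complex.mul_im, Complex.add_re, Complex.add_im,
      Complex.conj_re, Complex.conj_im, Complex.I_re, Complex.I_im, Complex.ofReal_re,
      Complex.ofReal_im]
    ring
  simpa [hinner] using
    two_mul_inner_div_sub_le_norm_sq (Complex.I * z) (Complex.I * w + A * z) s

end OneDimensional

section HalfDisk

/-- The open half-disk `D_r^+` of radius `r` centred at the origin, as a set in `ℝ × ℝ`; the
Euclidean norm is spelled out because the norm of `ℝ × ℝ` is the sup norm. -/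
def halfDisk (r : ℝ) : Set (ℝ × ℝ) := {x | Real.sqrt (x.1 ^ 2 + x.2 ^ 2) < r ∧ 0 < x.1}

variable {r : ℝ}

theorem mem_halfDisk_iff (hr : 0 < r) (x y : ℝ) :
    (x, y) ∈ halfDisk r ↔ x ∈ Ioo 0 √(r ^ 2 - y ^ 2) := by
  simp only [halfDisk, mem_ofPred_eq, mem_Ioo]
  rw [Real.sqrt_lt' hr, and_comm]
  refine and_congr_right fun hx => ?_
  rw [Real.lt_sqrt hx.le, lt_sub_iff_add_lt]

theorem isOpen_halfDisk (r : ℝ) : IsOpen (halfDisk r) :=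
  (isOpen_lt (f := fun x : ℝ × ℝ => √(x.1 ^ 2 + x.2 ^ 2)) (by fun_prop) continuous_const).inter
    (isOpen_lt continuous_const continuous_fst)

theorem isCompact_closure_halfDisk (r : ℝ) : IsCompact (closure (halfDisk r)) := by
  refine (isCompact_Icc.prod isCompact_Icc : IsCompact (Icc (-r) r ×ˢ Icc (-r) r))
    |>.closure_of_subset ?_
  rintro ⟨x, y⟩ ⟨h, -⟩
  exact ⟨abs_le.1 ((Real.abs_le_sqrt (le_add_of_nonneg_right (sq_nonneg y))).trans h.le),
    abs_le.1 ((Real.abs_le_sqrt (le_add_of_nonneg_left (sq_nonneg x))).trans h.le)⟩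

theorem sqrt_sq_sub_sq_pos {y : ℝ} (hy : y ∈ Ioo (-r) r) : 0 < √(r ^ 2 - y ^ 2) :=
  Real.sqrt_pos.2 (by nlinarith [hy.1, hy.2])

theorem sqrt_sq_sub_sq_eq_zero (hr : 0 ≤ r) {y : ℝ} (hy : y ∉ Ioo (-r) r) :
    √(r ^ 2 - y ^ 2) = 0 := by
  rw [mem_Ioo, ← abs_lt, not_lt] at hy
  exact Real.sqrt_eq_zero_of_nonpos (sub_nonpos.2 (sq_le_sq.2 (by rwa [abs_of_nonneg hr])))

theorem mem_closure_halfDisk {s y : ℝ} (hy : y ∈ Ioo (-r) r)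
    (hs : s ∈ Icc 0 √(r ^ 2 - y ^ 2)) : (s, y) ∈ closure (halfDisk r) := by
  have hr : 0 < r := neg_lt_self_iff.1 (hy.1.trans hy.2)
  rw [← closure_Ioo (sqrt_sq_sub_sq_pos hy).ne] at hs
  exact map_mem_closure (f := fun s : ℝ => (s, y)) (by fun_prop) hs
    fun x hx => (mem_halfDisk_iff hr x y).2 hx

theorem indicator_halfDisk_slice (hr : 0 < r) (g : ℝ × ℝ → ℝ) (y : ℝ) :
    (fun x => (halfDisk r).indicator g (x, y))
      = (Ioo 0 √(r ^ 2 - y ^ 2)).indicator fun x => g (x, y) := by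
  ext x
  simp only [indicator, mem_halfDisk_iff hr]

theorem integral_indicator_halfDisk_slice (hr : 0 < r) (g : ℝ × ℝ → ℝ) (y : ℝ) :
    ∫ x, (halfDisk r).indicator g (x, y) = ∫ s in (0 : ℝ)..√(r ^ 2 - y ^ 2), g (s, y) := by
  rw [indicator_halfDisk_slice hr, integral_indicator measurableSet_Ioo,
    intervalIntegral.integral_of_le (Real.sqrt_nonneg _), integral_Ioc_eq_integral_Ioo]

theorem ae_integrableOn_chord (hr : 0 < r) {g : ℝ × ℝ → ℝ} (hg : IntegrableOn g (halfDisk r)) :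
    ∀ᵐ y : ℝ, IntegrableOn (fun s => g (s, y)) (Icc 0 √(r ^ 2 - y ^ 2)) := by
  have hind := (integrable_indicator_iff (isOpen_halfDisk r).measurableSet).2 hg
  rw [Measure.volume_eq_prod] at hind
  filter_upwards [hind.prod_left_ae] with y hy
  rwa [indicator_halfDisk_slice hr, integrable_indicator_iff measurableSet_Ioo,
    ← integrableOn_Icc_iff_integrableOn_Ioo] at hy

theorem integrable_integral_chord (hr : 0 < r) {g : ℝ × ℝ → ℝ}
    (hg : IntegrableOn g (halfDisk r)) :
    Integrable fun y => ∫ s in (0 : ℝ)..√(r ^ 2 - y ^ 2), g (s, y) := by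
  have hind := (integrable_indicator_iff (isOpen_halfDisk r).measurableSet).2 hg
  rw [Measure.volume_eq_prod] at hind
  simpa only [integral_indicator_halfDisk_slice hr] using hind.integral_prod_right

theorem integral_halfDisk_eq_integral_chord (hr : 0 < r) {g : ℝ × ℝ → ℝ}
    (hg : IntegrableOn g (halfDisk r)) :
    ∫ x in halfDisk r, g x = ∫ y in Ioo (-r) r, ∫ s in (0 : ℝ)..√(r ^ 2 - y ^ 2), g (s, y) := by
  have hmeas := (isOpen_halfDisk r).measurableSet
  have hind := (integrable_indicator_iff hmeas).2 hg
  rw [Measure.volume_eq_prod] at hind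
  rw [← integral_indicator hmeas, Measure.volume_eq_prod, integral_prod_symm _ hind]
  simp only [integral_indicator_halfDisk_slice hr]
  refine (setIntegral_eq_integral_of_forall_compl_eq_zero fun y hy => ?_).symm
  rw [sqrt_sq_sub_sq_eq_zero hr.le hy, intervalIntegral.integral_same]

theorem sqrt_sq_sub_mul_sin_sq (hr : 0 ≤ r) {t : ℝ} (ht : 0 ≤ Real.cos t) :
    √(r ^ 2 - (r * Real.sin t) ^ 2) = r * Real.cos t := by
  rw [← Real.sqrt_sq (mul_nonneg hr ht), mul_pow r (Real.cos t), Real.cos_sq']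
  ring_nf

theorem image_mul_sin_Icc (hr : 0 ≤ r) :
    (fun t => r * Real.sin t) '' Icc (-(Real.pi / 2)) (Real.pi / 2) = Icc (-r) r := by
  rw [← image_image (r * ·) Real.sin, Real.bijOn_sin.image_eq, image_mul_left_Icc hr (by norm_num),
    mul_neg_one, mul_one]

theorem integral_halfCircle_eq_integral_chord_end (hr : 0 < r) (f : ℝ × ℝ → ℝ) :
    ∫ t in (-(Real.pi / 2))..(Real.pi / 2), f (r * Real.cos t, r * Real.sin t)
      = ∫ y in Ioo (-r) r, f (√(r ^ 2 - y ^ 2), y) / √(r ^ 2 - y ^ 2) := by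
  have hmono : MonotoneOn (fun t => r * Real.sin t) (Icc (-(Real.pi / 2)) (Real.pi / 2)) :=
    fun _ hx _ hy hxy =>
      mul_le_mul_of_nonneg_left (Real.monotoneOn_sin hx hy hxy) hr.le
  rw [← integral_Icc_eq_integral_Ioo, ← image_mul_sin_Icc hr.le,
    integral_image_eq_integral_deriv_smul_of_monotoneOn measurableSet_Icc
      (fun t _ => ((Real.hasDerivAt_sin t).const_mul r).hasDerivWithinAt) hmono,
    intervalIntegral.integral_of_le (by linarith [Real.pi_pos]), integral_Ioc_eq_integral_Ioo,
    integral_Icc_eq_integral_Ioo]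
  refine setIntegral_congr_fun measurableSet_Ioo fun t ht => ?_
  have hcos : 0 < Real.cos t := Real.cos_pos_of_mem_Ioo ht
  simp only [sqrt_sq_sub_mul_sin_sq hr.le hcos.le, smul_eq_mul]
  exact (mul_div_cancel₀ _ (mul_pos hr hcos).ne').symm

theorem integral_halfCircle_le_integral_halfDisk (hr : 0 < r) {f g : ℝ × ℝ → ℝ}
    (hf : ∀ x, 0 ≤ f x) (hg : IntegrableOn g (halfDisk r))
    (hfg : ∀ᵐ y, y ∈ Ioo (-r) r → f (√(r ^ 2 - y ^ 2), y) / √(r ^ 2 - y ^ 2)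
      ≤ ∫ s in (0 : ℝ)..√(r ^ 2 - y ^ 2), g (s, y)) :
    ∫ t in (-(Real.pi / 2))..(Real.pi / 2), f (r * Real.cos t, r * Real.sin t)
      ≤ ∫ x in halfDisk r, g x := by
  rw [integral_halfCircle_eq_integral_chord_end hr, integral_halfDisk_eq_integral_chord hr hg]
  exact integral_mono_of_nonneg (ae_of_all _ fun y => div_nonneg (hf _) (Real.sqrt_nonneg _))
    (integrable_integral_chord hr hg).integrableOn ((ae_restrict_iff' measurableSet_Ioo).2 hfg)

end HalfDisk

section MagneticEnergy

/-- The magnetic energy density `|(i∇ + A)u|²` of `u` for the vector potential `A`. -/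
noncomputable def magneticEnergy (A : ℝ × ℝ → ℝ × ℝ) (u : ℝ × ℝ → ℂ) (x : ℝ × ℝ) : ℝ :=
  ‖Complex.I * fderiv ℝ u x (1, 0) + ((A x).1 : ℂ) * u x‖ ^ 2
    + ‖Complex.I * fderiv ℝ u x (0, 1) + ((A x).2 : ℂ) * u x‖ ^ 2

/-- The Aharonov–Bohm potential with pole `a` and circulation `1/2`; at the pole itself, division
by zero makes it `0`. -/
noncomputable def aharonovBohm (a x : ℝ × ℝ) : ℝ × ℝ :=
  (-(x.2 - a.2) / (2 * ((x.1 - a.1) ^ 2 + (x.2 - a.2) ^ 2)),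
    (x.1 - a.1) / (2 * ((x.1 - a.1) ^ 2 + (x.2 - a.2) ^ 2)))

theorem continuousOn_aharonovBohm (a : ℝ × ℝ) : ContinuousOn (aharonovBohm a) {a}ᶜ := by
  have hne : ∀ x ∈ ({a}ᶜ : Set (ℝ × ℝ)), 2 * ((x.1 - a.1) ^ 2 + (x.2 - a.2) ^ 2) ≠ 0 := by
    intro x hx h0
    refine hx (Prod.ext ?_ ?_) <;> nlinarith [sq_nonneg (x.1 - a.1), sq_nonneg (x.2 - a.2)]
  exact (ContinuousOn.div (by fun_prop) (by fun_prop) hne).prodMk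
    (ContinuousOn.div (by fun_prop) (by fun_prop) hne)

variable {A : ℝ × ℝ → ℝ × ℝ} {u : ℝ × ℝ → ℂ} {U : Set (ℝ × ℝ)} {a : ℝ × ℝ} {r : ℝ}

theorem magneticEnergy_eventuallyEq_zero (hvan : u =ᶠ[𝓝 a] 0) :
    magneticEnergy A u =ᶠ[𝓝 a] 0 := by
  filter_upwards [hvan.eventuallyEq_nhds] with x hx
  simp [magneticEnergy, hx.fderiv_eq, hx.eq_of_nhds]

theorem continuousOn_magneticEnergy (hU : IsOpen U) (hu : ContDiffOn ℝ 1 u U)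
    (hA : ContinuousOn A {a}ᶜ) (hvan : u =ᶠ[𝓝 a] 0) : ContinuousOn (magneticEnergy A u) U := by
  intro x hx
  refine ContinuousAt.continuousWithinAt ?_
  rcases eq_or_ne x a with rfl | hxa
  · exact (continuousAt_const (y := (0 : ℝ))).congr (magneticEnergy_eventuallyEq_zero hvan).symm
  · have hdu : ContinuousAt (fderiv ℝ u) x :=
      (hu.continuousOn_fderiv_of_isOpen hU le_rfl).continuousAt (hU.mem_nhds hx)
    have hux : ContinuousAt u x := hu.continuousOn.continuousAt (hU.mem_nhds hx)
    have hAx : ContinuousAt A x := hA.continuousAt (isOpen_compl_singleton.mem_nhds hxa)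
    unfold magneticEnergy
    fun_prop

theorem integrableOn_halfDisk_magneticEnergy (hU : IsOpen U) (hUD : closure (halfDisk r) ⊆ U)
    (hu : ContDiffOn ℝ 1 u U) (hA : ContinuousOn A {a}ᶜ) (hvan : u =ᶠ[𝓝 a] 0) :
    IntegrableOn (magneticEnergy A u) (halfDisk r) :=
  (((continuousOn_magneticEnergy hU hu hA hvan).mono hUD).integrableOn_compact
    (isCompact_closure_halfDisk r)).mono_set subset_closure

theorem norm_sq_div_le_integral_magneticEnergy {R y : ℝ} (hR : 0 ≤ R)
    (hu : ∀ s ∈ Icc 0 R, DifferentiableAt ℝ u (s, y)) (h0 : u (0, y) = 0)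
    (hint : IntegrableOn (fun s => magneticEnergy A u (s, y)) (Icc 0 R)) :
    ‖u (R, y)‖ ^ 2 / R ≤ ∫ s in (0 : ℝ)..R, magneticEnergy A u (s, y) := by
  refine norm_sq_div_le_integral_of_inner_le (h := fun s => u (s, y))
    (h' := fun s => fderiv ℝ u (s, y) (1, 0)) hR (fun s hs => ?_) h0 hint fun s _ => ?_
  · exact (hu s hs).hasFDerivAt.comp_hasDerivAt s ((hasDerivAt_id s).prodMk (hasDerivAt_const s y))
  · exact (two_mul_inner_div_sub_le_norm_sq_magnetic _ _ (A (s, y)).1 s).trans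
      (le_add_of_nonneg_right (sq_nonneg _))

end MagneticEnergy

theorem eventually_nhds_of_forall_sqrt_lt {a : ℝ × ℝ} {p : ℝ × ℝ → Prop}
    (hp : ∃ ε : ℝ, 0 < ε ∧
      ∀ x : ℝ × ℝ, Real.sqrt ((x.1 - a.1) ^ 2 + (x.2 - a.2) ^ 2) < ε → p x) :
    ∀ᶠ x in 𝓝 a, p x := by
  obtain ⟨ε, hε, hp⟩ := hp
  have hcont : ContinuousAt (fun x : ℝ × ℝ => √((x.1 - a.1) ^ 2 + (x.2 - a.2) ^ 2)) a := by
    fun_prop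
  exact (hcont.eventually_lt_const (u := ε) (by simpa using hε)).mono hp

theorem poincare_trace_halfdisk_general {r : ℝ} (hr : 0 < r) {A : ℝ × ℝ → ℝ × ℝ}
    {u : ℝ × ℝ → ℂ} (hu : ∀ x ∈ closure (halfDisk r), DifferentiableAt ℝ u x)
    (hbdry : ∀ y ∈ Ioo (-r) r, u (0, y) = 0)
    (hint : IntegrableOn (magneticEnergy A u) (halfDisk r)) :
    (1 / r) * (∫ t in (-(Real.pi / 2))..(Real.pi / 2),
          ‖u (r * Real.cos t, r * Real.sin t)‖ ^ 2 * r)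
      ≤ ∫ x in halfDisk r, magneticEnergy A u x := by
  rw [intervalIntegral.integral_mul_const, one_div, mul_comm, mul_inv_cancel_right₀ hr.ne']
  refine integral_halfCircle_le_integral_halfDisk (f := fun x => ‖u x‖ ^ 2) hr
    (fun _ => sq_nonneg _) hint ?_
  filter_upwards [ae_integrableOn_chord hr hint] with y hchord hy
  exact norm_sq_div_le_integral_magneticEnergy (Real.sqrt_nonneg _)
    (fun s hs => hu _ (mem_closure_halfDisk hy hs)) (hbdry y hy) hchord

/-- Poincaré-type trace inequality on the half-disk `D_r^+` for the Aharonov–Bohm operator: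
`(1/r)∫_{S_r^+}|u|² ds ≤ ∫_{D_r^+}|(i∇+A_a)u|²`, for `u` smooth near the closure of
`D_r^+`, vanishing near the pole `a ∈ D_r^+` and on `{x₁ = 0}`. -/
theorem poincare_trace_halfdisk (r : ℝ) (hr : 0 < r) (a : ℝ × ℝ)
    (ha : Real.sqrt (a.1 ^ 2 + a.2 ^ 2) < r ∧ 0 < a.1)
    (U : Set (ℝ × ℝ)) (hU : IsOpen U)
    (hUD : closure {x : ℝ × ℝ | Real.sqrt (x.1 ^ 2 + x.2 ^ 2) < r ∧ 0 < x.1} ⊆ U)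
    (u : ℝ × ℝ → ℂ) (hu : ContDiffOn ℝ (⊤ : ℕ∞) u U)
    (hvan : ∃ ε : ℝ, 0 < ε ∧ ∀ x : ℝ × ℝ,
      Real.sqrt ((x.1 - a.1) ^ 2 + (x.2 - a.2) ^ 2) < ε → u x = 0)
    (hbdry : ∀ x₂ : ℝ, u (0, x₂) = 0) :
    (1 / r) * (∫ t in (-(Real.pi / 2))..(Real.pi / 2),
          ‖u (r * Real.cos t, r * Real.sin t)‖ ^ 2 * r)
      ≤ ∫ x in {x : ℝ × ℝ | Real.sqrt (x.1 ^ 2 + x.2 ^ 2) < r ∧ 0 < x.1},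
          (‖Complex.I * fderiv ℝ u x (1, 0)
              + ((-(x.2 - a.2) / (2 * ((x.1 - a.1) ^ 2 + (x.2 - a.2) ^ 2)) : ℝ) : ℂ) * u x‖ ^ 2
            + ‖Complex.I * fderiv ℝ u x (0, 1)
              + (((x.1 - a.1) / (2 * ((x.1 - a.1) ^ 2 + (x.2 - a.2) ^ 2)) : ℝ) : ℂ) * u x‖ ^ 2) := by
  have hu₁ : ContDiffOn ℝ 1 u U := hu.of_le (by simp)
  exact poincare_trace_halfdisk_general (A := aharonovBohm a) hr
    (fun x hx => (hu₁.differentiableOn one_ne_zero).differentiableAt (hU.mem_nhds (hUD hx)))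
    (fun y _ => hbdry y) (integrableOn_halfDisk_magneticEnergy hU hUD hu₁
      (continuousOn_aharonovBohm a) (eventually_nhds_of_forall_sqrt_lt hvan))
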